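/- Let (X, W) be a strong left Frobenius pair in A and let n ≥ 0. The following are equivalent: (1) X̂_n = A, i.e., every object of A has X-resolution dimension at most n; (2) ((W, A), (X, Ŵ_n)) is a Hovey twin cotorsion pair on A, i.e., both (W, A) and (X, Ŵ_n) are cotorsion pairs on A, Ext^1(W, Y) = 0 for all W ∈ W, Y ∈ Ŵ_n, and Cone(Ŵ_n, W) = CoCone(Ŵ_n, W). -/

import Mathlib

/-!
Pushing out and pulling back short exact sequences gives
`Cone(CoCone(V, X), X) = Cone(V, X) = CoCone(Cone(V, W), X)` for any class `V` of objects. Since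
`Ŵₙ₊₁ = Cone(Ŵₙ, W)` and `X̂ₙ₊₁ = Cone(X̂ₙ, X)`, induction on `n` yields the Auslander–Buchweitz
approximations `X̂ₙ = CoCone(Ŵₙ, X)` and `X̂ₙ₊₁ = Cone(Ŵₙ, X)`, from which also `Ŵₙ = X̂ₙ ∩ X^⊥`.
Hence `X̂ₙ = C` if and only if `(X, Ŵₙ)` is a cotorsion pair.

If `X̂ₙ = C`, then dimension shifting from `Extⁱ(W, X) = 0` gives `Extⁱ(W, -) = 0`, so that `W`
consists of projective objects, and every object is a quotient of one in `W`; thus `(W, C)` is a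
cotorsion pair. Moreover `Cone(Ŵₙ, W) = Ŵₙ₊₁ = X̂ₙ₊₁ ∩ X^⊥ = Ŵₙ`, and `CoCone(Ŵₙ, W) = Ŵₙ`
because the sequences defining it split.
-/

open CategoryTheory CategoryTheory.Limits CategoryTheory.Abelian ZeroObject

universe w v u

namespace FrobeniusPaper

variable {C : Type u} [Category.{v} C] [Abelian C]

/-- `f, g` form a short exact sequence `0 → A → B → D → 0` in the abelian category `C`. -/
def IsSES {A B D : C} (f : A ⟶ B) (g : B ⟶ D) : Prop :=
  ∃ w : f ≫ g = 0, (ShortComplex.mk f g w).ShortExact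

/-- A "subcategory" in the sense of the paper: a full additive subcategory, regarded as the
predicate of membership for its objects, closed under isomorphisms and direct summands. -/
structure IsSubcat (X : C → Prop) : Prop where
  zero : X 0
  iso_closed : ∀ {A B : C}, (A ≅ B) → X A → X B
  biprod_closed : ∀ {A B : C}, X A → X B → X (A ⊞ B)
  summand_closed : ∀ {A M : C} (i : A ⟶ M) (p : M ⟶ A), i ≫ p = 𝟙 A → X M → X A

/-- `Hat X n M` means `M ∈ X̂ₙ`, i.e. there is an exact sequence
`0 → Xₙ → ⋯ → X₁ → X₀ → M → 0` with all `Xᵢ ∈ X`. -/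
def Hat (X : C → Prop) : ℕ → C → Prop
  | 0, M => X M
  | (n + 1), M => ∃ (K E : C) (f : K ⟶ E) (g : E ⟶ M), IsSES f g ∧ X E ∧ Hat X n K

/-- `M ∈ X̂ = ⋃ₙ X̂ₙ`. -/
def HatAll (X : C → Prop) (M : C) : Prop := ∃ n, Hat X n M

/-- `W` is a cogenerator for `X`. -/
def IsCogenerator (W X : C → Prop) : Prop :=
  (∀ M, W M → X M) ∧
    ∀ M, X M → ∃ (W₀ X' : C) (f : M ⟶ W₀) (g : W₀ ⟶ X'), IsSES f g ∧ W W₀ ∧ X X'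

/-- `W` is a generator for `X`. -/
def IsGenerator (W X : C → Prop) : Prop :=
  (∀ M, W M → X M) ∧
    ∀ M, X M → ∃ (X' W₀ : C) (f : X' ⟶ W₀) (g : W₀ ⟶ M), IsSES f g ∧ W W₀ ∧ X X'

/-- `X` is closed under extensions. -/
def ExtClosed (X : C → Prop) : Prop :=
  ∀ ⦃A B D : C⦄ (f : A ⟶ B) (g : B ⟶ D), IsSES f g → X A → X D → X B

/-- `X` is closed under kernels of epimorphisms. -/
def KerEpiClosed (X : C → Prop) : Prop :=
  ∀ ⦃A B D : C⦄ (f : A ⟶ B) (g : B ⟶ D), IsSES f g → X B → X D → X A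

/-- A thick subcategory: closed under direct summands and two-out-of-three for
short exact sequences. -/
def IsThickSub (T : C → Prop) : Prop :=
  IsSubcat T ∧ ∀ ⦃A B D : C⦄ (f : A ⟶ B) (g : B ⟶ D), IsSES f g →
    (T A → T B → T D) ∧ (T A → T D → T B) ∧ (T B → T D → T A)

/-- Membership in `Thick(X)`, the smallest thick subcategory containing `X`. -/
def thickClosure (X : C → Prop) (M : C) : Prop :=
  ∀ T : C → Prop, IsThickSub T → (∀ N, X N → T N) → T M

variable [HasExt.{w} C]

/-- `Y ∈ X^⊥`, i.e. `Extⁱ(M, Y) = 0` for all `i ≥ 1` and `M ∈ X`. -/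
def rightPerp (X : C → Prop) (Y : C) : Prop :=
  ∀ M, X M → ∀ i : ℕ, 1 ≤ i → Subsingleton (Abelian.Ext M Y i)

/-- A left Frobenius pair `(X, W)`. -/
structure LeftFrobenius (X W : C → Prop) : Prop where
  subX : IsSubcat X
  subW : IsSubcat W
  extClosed : ExtClosed X
  kerEpiClosed : KerEpiClosed X
  cogen : IsCogenerator W X
  perp : ∀ M, W M → rightPerp X M

/-- A strong left Frobenius pair `(X, W)`. -/
structure StrongLeftFrobenius (X W : C → Prop) extends LeftFrobenius X W : Prop where
  gen : IsGenerator W X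
  proj : ∀ M N, W M → X N → ∀ i : ℕ, 1 ≤ i → Subsingleton (Abelian.Ext M N i)

/-- A cotorsion pair `(U, V)` on an extension-closed subcategory `B` of `C`. -/
structure CotorsionPairOn (B U V : C → Prop) : Prop where
  subU : ∀ M, U M → B M
  subV : ∀ M, V M → B M
  isoU : ∀ {A B' : C}, (A ≅ B') → U A → U B'
  summandU : ∀ {A M : C} (i : A ⟶ M) (p : M ⟶ A), i ≫ p = 𝟙 A → U M → U A
  isoV : ∀ {A B' : C}, (A ≅ B') → V A → V B'
  summandV : ∀ {A M : C} (i : A ⟶ M) (p : M ⟶ A), i ≫ p = 𝟙 A → V M → V A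
  ext1 : ∀ M N, U M → V N → Subsingleton (Abelian.Ext M N 1)
  res : ∀ M, B M → ∃ (V₀ U₀ : C) (f : V₀ ⟶ U₀) (g : U₀ ⟶ M), IsSES f g ∧ U U₀ ∧ V V₀
  cores : ∀ M, B M → ∃ (V₀ U₀ : C) (f : M ⟶ V₀) (g : V₀ ⟶ U₀), IsSES f g ∧ U U₀ ∧ V V₀

/-- `Cone(V, S)`: objects `M` admitting a short exact sequence `0 → V₀ → S₀ → M → 0` with
`V₀ ∈ V` and `S₀ ∈ S`. -/
def ConeCls (V S : C → Prop) (M : C) : Prop :=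
  ∃ (V₀ S₀ : C) (f : V₀ ⟶ S₀) (g : S₀ ⟶ M), IsSES f g ∧ V V₀ ∧ S S₀

/-- `CoCone(V, S)`: objects `M` admitting a short exact sequence `0 → M → V₀ → S₀ → 0` with
`V₀ ∈ V` and `S₀ ∈ S`. -/
def CoConeCls (V S : C → Prop) (M : C) : Prop :=
  ∃ (V₀ S₀ : C) (f : M ⟶ V₀) (g : V₀ ⟶ S₀), IsSES f g ∧ V V₀ ∧ S S₀

section ShortExactSequences

variable {𝒜 : Type u} [Category.{v} 𝒜] [Abelian 𝒜]

lemma isSES_iff_isPushout {A B D : 𝒜} {f : A ⟶ B} {g : B ⟶ D} :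
    IsSES f g ↔ Mono f ∧ IsPushout f (0 : A ⟶ 0) g 0 := by
  constructor
  · rintro ⟨w, h⟩
    have : Epi g := h.epi_g
    exact ⟨h.mono_f, .of_isColimit' ⟨by simp [w]⟩ (PushoutCocone.IsColimit.mk _
      (fun s => h.exact.desc s.inl (by simp [s.condition])) (fun s => h.exact.g_desc _ _)
      (fun s => by ext) fun s m hm _ => (cancel_epi g).1 (hm.trans (h.exact.g_desc _ _).symm))⟩
  · rintro ⟨_, sq⟩
    have w : f ≫ g = 0 := by simp [sq.w]
    have epi_g : Epi g := ⟨fun s t hst => sq.hom_ext hst (by ext)⟩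
    have exact_f_g : (ShortComplex.mk f g w).Exact := ShortComplex.exact_of_g_is_cokernel _
      (CokernelCofork.IsColimit.ofπ' _ _ fun t ht =>
        ⟨sq.desc t 0 (by simpa using ht), sq.inl_desc _ _ _⟩)
    exact ⟨w, { exact := exact_f_g }⟩

lemma isSES_iff_isPullback {A B D : 𝒜} {f : A ⟶ B} {g : B ⟶ D} :
    IsSES f g ↔ Epi g ∧ IsPullback f (0 : A ⟶ 0) g 0 := by
  constructor
  · rintro ⟨w, h⟩
    have : Mono f := h.mono_f
    exact ⟨h.epi_g, .of_isLimit' ⟨by simp [w]⟩ (PullbackCone.IsLimit.mk _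
      (fun s => h.exact.lift s.fst (by simp [s.condition])) (fun s => h.exact.lift_f _ _)
      (fun s => by ext) fun s m hm _ => (cancel_mono f).1 (hm.trans (h.exact.lift_f _ _).symm))⟩
  · rintro ⟨_, sq⟩
    have w : f ≫ g = 0 := by simp [sq.w]
    have mono_f : Mono f := ⟨fun s t hst => sq.hom_ext hst (by ext)⟩
    have exact_f_g : (ShortComplex.mk f g w).Exact := ShortComplex.exact_of_f_is_kernel _
      (KernelFork.IsLimit.ofι' _ _ fun t ht =>
        ⟨sq.lift t 0 (by simpa using ht), sq.lift_fst _ _ _⟩)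
    exact ⟨w, { exact := exact_f_g }⟩

lemma isSES_zero_id (M : 𝒜) : IsSES (0 : (0 : 𝒜) ⟶ M) (𝟙 M) :=
  isSES_iff_isPullback.2 ⟨inferInstance, IsPullback.zero_left M⟩

lemma isSES_id_zero (M : 𝒜) : IsSES (𝟙 M) (0 : M ⟶ (0 : 𝒜)) :=
  isSES_iff_isPushout.2 ⟨inferInstance, IsPushout.zero_bot M⟩

lemma isSES_kernel_ι {B D : 𝒜} (g : B ⟶ D) [Epi g] : IsSES (kernel.ι g) g :=
  ⟨kernel.condition g, { exact := ShortComplex.exact_kernel g }⟩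

lemma IsSES.exists_of_isPushout {A B D B' P : 𝒜} {f : A ⟶ B} {g : B ⟶ D} (h : IsSES f g)
    {u : A ⟶ B'} {inl : B ⟶ P} {inr : B' ⟶ P} (sq : IsPushout f u inl inr) :
    ∃ q : P ⟶ D, IsSES inr q := by
  obtain ⟨_, hsq⟩ := isSES_iff_isPushout.1 h
  have mono_inr : Mono inr := mono_inr_of_isColimit f u sq.isColimit
  exact ⟨_, isSES_iff_isPushout.2
    ⟨mono_inr, IsPushout.of_top' (v₂₁ := 0) (by simpa using hsq) sq⟩⟩

lemma IsSES.exists_of_isPullback {A B D D' P : 𝒜} {f : A ⟶ B} {g : B ⟶ D} (h : IsSES f g)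
    {i : D' ⟶ D} {fst : P ⟶ D'} {snd : P ⟶ B} (sq : IsPullback fst snd i g) :
    ∃ j : A ⟶ P, IsSES j fst := by
  obtain ⟨_, hsq⟩ := isSES_iff_isPullback.1 h
  have epi_fst : Epi fst := epi_fst_of_isLimit i g sq.isLimit
  exact ⟨_, isSES_iff_isPullback.2
    ⟨epi_fst, (IsPullback.of_bot' (v₁₂ := 0) (by simpa using hsq.flip) sq).flip⟩⟩

/-- Noether's isomorphism `(E/A)/(B/A) ≅ E/B` for subobjects `A ⊆ B ⊆ E`. -/
lemma IsSES.exists_comp_mono {A B D E F : 𝒜} {f : A ⟶ B} {g : B ⟶ D} (h : IsSES f g)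
    {i : B ⟶ E} {k : E ⟶ F} (h' : IsSES i k) :
    ∃ (Q : 𝒜) (p : E ⟶ Q) (j : D ⟶ Q) (q : Q ⟶ F), IsSES (f ≫ i) p ∧ IsSES j q := by
  have sq := IsPushout.of_hasPushout i g
  obtain ⟨_, hsq⟩ := isSES_iff_isPushout.1 h
  have mono_i : Mono i := (isSES_iff_isPushout.1 h').1
  obtain ⟨q, hq⟩ := h'.exists_of_isPushout sq
  exact ⟨_, _, _, q, isSES_iff_isPushout.2
    ⟨inferInstance, by simpa using hsq.paste_horiz sq⟩, hq⟩

/-- For `M ⊆ D = B/A`, the preimage `P ⊆ B` of `M` satisfies `P/A ≅ M` and `B/P ≅ D/M`. -/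
lemma IsSES.exists_epi_comp {A B D M U : 𝒜} {f : A ⟶ B} {g : B ⟶ D} (h : IsSES f g)
    {i : M ⟶ D} {k : D ⟶ U} (h' : IsSES i k) :
    ∃ (P : 𝒜) (j : A ⟶ P) (q : P ⟶ M) (r : P ⟶ B), IsSES j q ∧ IsSES r (g ≫ k) := by
  have sq := IsPullback.of_hasPullback i g
  have epi_g : Epi g := (isSES_iff_isPullback.1 h).1
  obtain ⟨_, hsq⟩ := isSES_iff_isPullback.1 h'
  obtain ⟨j, hj⟩ := h.exists_of_isPullback sq
  exact ⟨_, j, _, _, hj, isSES_iff_isPullback.2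
    ⟨inferInstance, by simpa using sq.flip.paste_vert hsq⟩⟩

end ShortExactSequences

section ConeClasses

variable {𝒜 : Type u} [Category.{v} 𝒜] [Abelian 𝒜] {V W X : 𝒜 → Prop}

lemma hat_succ (n : ℕ) : Hat X (n + 1) = ConeCls (Hat X n) X := by
  funext M
  simp only [Hat, ConeCls, and_comm]

lemma hat_succ_of_hat (h0 : X 0) {n : ℕ} {M : 𝒜} (hM : Hat X n M) : Hat X (n + 1) M := by
  induction n generalizing M with
  | zero => exact ⟨0, M, 0, 𝟙 M, isSES_zero_id M, hM, h0⟩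
  | succ n ih =>
    obtain ⟨K, E, f, g, h, hE, hK⟩ := hM
    exact ⟨K, E, f, g, h, hE, ih hK⟩

lemma Hat.mono (hWX : ∀ M, W M → X M) {n : ℕ} {M : 𝒜} (hM : Hat W n M) : Hat X n M := by
  induction n generalizing M with
  | zero => exact hWX M hM
  | succ n ih =>
    obtain ⟨K, E, f, g, h, hE, hK⟩ := hM
    exact ⟨K, E, f, g, h, hWX E hE, ih hK⟩

lemma coConeCls_of_mem {S : 𝒜 → Prop} (h0 : S 0) {M : 𝒜} (hM : V M) : CoConeCls V S M :=
  ⟨M, 0, 𝟙 M, 0, isSES_id_zero M, hM, h0⟩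

lemma coneCls_coConeCls (h0 : X 0) (hext : ExtClosed X) :
    ConeCls (CoConeCls V X) X = ConeCls V X := by
  funext M
  refine propext ⟨?_, ?_⟩
  · rintro ⟨K, E, f, g, h, ⟨V₀, U, f', g', h', hV₀, hU⟩, hE⟩
    have sq := IsPushout.of_hasPushout f f'
    obtain ⟨p, hp⟩ := h.exists_of_isPushout sq
    obtain ⟨q, hq⟩ := h'.exists_of_isPushout sq.flip
    exact ⟨V₀, _, _, p, hp, hV₀, hext _ q hq hE hU⟩
  · rintro ⟨V₀, U, f, g, h, hV₀, hU⟩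
    exact ⟨V₀, U, f, g, h, coConeCls_of_mem h0 hV₀, hU⟩

lemma coConeCls_coneCls (hcogen : IsCogenerator W X) (hker : KerEpiClosed X) :
    CoConeCls (ConeCls V W) X = ConeCls V X := by
  funext M
  refine propext ⟨?_, ?_⟩
  · rintro ⟨N, U, i, k, h, ⟨V₀, W₀, f, g, h', hV₀, hW₀⟩, hU⟩
    obtain ⟨P, j, q, r, hj, hr⟩ := h'.exists_epi_comp h
    exact ⟨V₀, P, j, q, hj, hV₀, hker r _ hr (hcogen.1 W₀ hW₀) hU⟩
  · rintro ⟨V₀, U, f, g, h, hV₀, hU⟩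
    obtain ⟨W₀, U', i, k, h', hW₀, hU'⟩ := hcogen.2 U hU
    obtain ⟨Q, p, j, q, hp, hj⟩ := h.exists_comp_mono h'
    exact ⟨Q, U', j, q, hj, ⟨V₀, W₀, f ≫ i, p, hp, hV₀, hW₀⟩, hU'⟩

theorem hat_eq_coConeCls_hat (hcogen : IsCogenerator W X) (h0 : X 0) (hext : ExtClosed X)
    (hker : KerEpiClosed X) (n : ℕ) : Hat X n = CoConeCls (Hat W n) X := by
  induction n with
  | zero =>
    funext M
    exact propext ⟨hcogen.2 M, fun ⟨W₀, _, f, g, h, hW₀, hU⟩ => hker f g h (hcogen.1 W₀ hW₀) hU⟩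
  | succ n ih => calc
      Hat X (n + 1) = ConeCls (Hat X n) X := hat_succ n
      _ = ConeCls (CoConeCls (Hat W n) X) X := by rw [ih]
      _ = ConeCls (Hat W n) X := coneCls_coConeCls h0 hext
      _ = CoConeCls (ConeCls (Hat W n) W) X := (coConeCls_coneCls hcogen hker).symm
      _ = CoConeCls (Hat W (n + 1)) X := by rw [hat_succ]

theorem hat_succ_eq_coneCls_hat (hcogen : IsCogenerator W X) (h0 : X 0) (hext : ExtClosed X)
    (hker : KerEpiClosed X) (n : ℕ) : Hat X (n + 1) = ConeCls (Hat W n) X := by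
  rw [hat_succ, hat_eq_coConeCls_hat hcogen h0 hext hker, coneCls_coConeCls h0 hext]

end ConeClasses

section RightOrthogonal

variable {𝒜 : Type u} [Category.{v} 𝒜] [Abelian 𝒜] [HasExt.{w} 𝒜] {X Y : 𝒜 → Prop}

lemma rightPerp_of_retract {M N : 𝒜} (r : Retract M N) (hN : rightPerp X N) :
    rightPerp X M := by
  intro Z hZ i hi
  have := hN Z hZ i hi
  refine subsingleton_of_forall_eq 0 fun x => ?_
  rw [← x.comp_mk₀_id, ← r.retract, ← Ext.mk₀_comp_mk₀, ← Ext.comp_assoc_of_second_deg_zero,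
    Subsingleton.elim (x.comp (Ext.mk₀ r.i) (add_zero i)) 0, Ext.zero_comp]

lemma IsSES.rightPerp_middle {A B D : 𝒜} {f : A ⟶ B} {g : B ⟶ D} (h : IsSES f g)
    (hA : rightPerp X A) (hD : rightPerp X D) : rightPerp X B := by
  intro Z hZ i hi
  have := hA Z hZ i hi
  have := hD Z hZ i hi
  refine subsingleton_of_forall_eq 0 fun x => ?_
  obtain ⟨y, rfl⟩ := Ext.covariant_sequence_exact₂ Z h.2 x (Subsingleton.elim _ _)
  rw [Subsingleton.elim y 0, Ext.zero_comp]

lemma IsSES.rightPerp_right {A B D : 𝒜} {f : A ⟶ B} {g : B ⟶ D} (h : IsSES f g)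
    (hA : rightPerp X A) (hB : rightPerp X B) : rightPerp X D := by
  intro Z hZ i hi
  have := hB Z hZ i hi
  have := hA Z hZ (i + 1) (Nat.le_add_left 1 i)
  refine subsingleton_of_forall_eq 0 fun x => ?_
  obtain ⟨y, rfl⟩ := Ext.covariant_sequence_exact₃ Z h.2 x rfl (Subsingleton.elim _ _)
  rw [Subsingleton.elim y 0, Ext.zero_comp]

lemma rightPerp_of_hat (hY : ∀ M, Y M → rightPerp X M) {n : ℕ} {M : 𝒜} (hM : Hat Y n M) :
    rightPerp X M := by
  induction n generalizing M with
  | zero => exact hY M hM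
  | succ n ih =>
    obtain ⟨K, E, f, g, h, hE, hK⟩ := hM
    exact h.rightPerp_right (ih hK) (hY E hE)

lemma IsSES.nonempty_retract {A B D : 𝒜} {f : A ⟶ B} {g : B ⟶ D} (h : IsSES f g)
    [Subsingleton (Ext D A 1)] : Nonempty (Retract A B) := by
  obtain ⟨y, hy⟩ := Ext.contravariant_sequence_exact₁ h.2 A (Ext.mk₀ (𝟙 A)) (n₁ := 1) rfl
    (Subsingleton.elim (α := Ext D A 1) _ _)
  refine ⟨⟨f, Ext.homEquiv₀ y, (Ext.mk₀_bijective _ _).1 ?_⟩⟩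
  rw [← hy, ← Ext.mk₀_comp_mk₀, Ext.mk₀_homEquiv₀_apply]

end RightOrthogonal

section Projective

variable {𝒜 : Type u} [Category.{v} 𝒜] [Abelian 𝒜] {P V : 𝒜 → Prop}

lemma coConeCls_iff_of_projective (h0 : P 0) (hP : ∀ M, P M → Projective M)
    (hV : ∀ {M N : 𝒜} (i : M ⟶ N) (p : N ⟶ M), i ≫ p = 𝟙 M → V N → V M) {M : 𝒜} :
    CoConeCls V P M ↔ V M := by
  refine ⟨?_, coConeCls_of_mem h0⟩
  rintro ⟨N, Q, f, g, ⟨_, h⟩, hN, hQ⟩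
  have : Projective Q := hP Q hQ
  let s := h.splittingOfProjective
  exact hV f s.r s.f_r hN

variable [HasExt.{w} 𝒜]

lemma cotorsionPairOn_of_projective (hP : IsSubcat P) (hproj : ∀ M, P M → Projective M)
    (hquot : ∀ M : 𝒜, ∃ (Q : 𝒜) (g : Q ⟶ M), P Q ∧ Epi g) :
    CotorsionPairOn (fun _ : 𝒜 => True) P (fun _ => True) where
  subU _ _ := trivial
  subV _ _ := trivial
  isoU := hP.iso_closed
  summandU := hP.summand_closed
  isoV _ _ := trivial
  summandV _ _ _ _ := trivial
  ext1 M N hM _ :=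
    have := hproj M hM
    Ext.subsingleton_of_projective M N 0
  res M _ := by
    obtain ⟨Q, g, hQ, _⟩ := hquot M
    exact ⟨_, Q, _, g, isSES_kernel_ι g, hQ, trivial⟩
  cores M _ := ⟨M, 0, 𝟙 M, 0, isSES_id_zero M, hP.zero, trivial⟩

end Projective

section FrobeniusPairs

variable {𝒜 : Type u} [Category.{v} 𝒜] [Abelian 𝒜] [HasExt.{w} 𝒜] {X W : 𝒜 → Prop}

namespace LeftFrobenius

lemma hat_eq_coConeCls (hF : LeftFrobenius X W) (n : ℕ) : Hat X n = CoConeCls (Hat W n) X :=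
  hat_eq_coConeCls_hat hF.cogen hF.subX.zero hF.extClosed hF.kerEpiClosed n

lemma hat_succ_eq_coneCls (hF : LeftFrobenius X W) (n : ℕ) :
    Hat X (n + 1) = ConeCls (Hat W n) X :=
  hat_succ_eq_coneCls_hat hF.cogen hF.subX.zero hF.extClosed hF.kerEpiClosed n

lemma mem_iff_mem_and_rightPerp (hF : LeftFrobenius X W) {M : 𝒜} : W M ↔ X M ∧ rightPerp X M := by
  refine ⟨fun hM => ⟨hF.cogen.1 M hM, hF.perp M hM⟩, fun ⟨hM, hperp⟩ => ?_⟩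
  obtain ⟨W₀, U, f, g, h, hW₀, hU⟩ := hF.cogen.2 M hM
  have := hperp U hU 1 le_rfl
  obtain ⟨r⟩ := h.nonempty_retract
  exact hF.subW.summand_closed r.i r.r r.retract hW₀

theorem hat_iff_hat_and_rightPerp (hF : LeftFrobenius X W) {n : ℕ} {M : 𝒜} :
    Hat W n M ↔ Hat X n M ∧ rightPerp X M := by
  refine ⟨fun hM => ⟨hM.mono hF.cogen.1, rightPerp_of_hat hF.perp hM⟩, fun ⟨hM, hperp⟩ => ?_⟩
  cases n with
  | zero => exact hF.mem_iff_mem_and_rightPerp.2 ⟨hM, hperp⟩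
  | succ n =>
    rw [hF.hat_succ_eq_coneCls] at hM
    obtain ⟨V, U, f, g, h, hV, hU⟩ := hM
    have hU_perp : rightPerp X U := h.rightPerp_middle (rightPerp_of_hat hF.perp hV) hperp
    exact ⟨V, U, f, g, h, hF.mem_iff_mem_and_rightPerp.2 ⟨hU, hU_perp⟩, hV⟩

lemma coneCls_hat_iff (hF : LeftFrobenius X W) {n : ℕ} {M : 𝒜} (hM : Hat X n M) :
    ConeCls (Hat W n) W M ↔ Hat W n M := by
  rw [← hat_succ, hF.hat_iff_hat_and_rightPerp, hF.hat_iff_hat_and_rightPerp]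
  exact and_congr_left' (iff_of_true (hat_succ_of_hat hF.subX.zero hM) hM)

lemma cotorsionPairOn_hat (hF : LeftFrobenius X W) {n : ℕ} (hX : ∀ M, Hat X n M) :
    CotorsionPairOn (fun _ => True) X (Hat W n) := by
  have hat_iff_perp : ∀ M, Hat W n M ↔ rightPerp X M := fun M =>
    hF.hat_iff_hat_and_rightPerp.trans (and_iff_right (hX M))
  have hat_of_retract {M N : 𝒜} (r : Retract M N) (hN : Hat W n N) : Hat W n M :=
    (hat_iff_perp M).2 (rightPerp_of_retract r ((hat_iff_perp N).1 hN))
  exact {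
    subU := fun _ _ => trivial
    subV := fun _ _ => trivial
    isoU := hF.subX.iso_closed
    summandU := hF.subX.summand_closed
    isoV := fun e => hat_of_retract e.symm.retract
    summandV := fun i p hip => hat_of_retract ⟨i, p, hip⟩
    ext1 := fun M N hM hN => (hat_iff_perp N).1 hN M hM 1 le_rfl
    res := fun M _ => by
      have hM := hat_succ_of_hat hF.subX.zero (hX M)
      rw [hF.hat_succ_eq_coneCls] at hM
      simpa only [ConeCls, and_comm] using hM
    cores := fun M _ => by
      have hM := hX M
      rw [hF.hat_eq_coConeCls] at hM
      simpa only [CoConeCls, and_comm] using hM }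

theorem forall_hat_iff_cotorsionPairOn (hF : LeftFrobenius X W) {n : ℕ} :
    (∀ M, Hat X n M) ↔ CotorsionPairOn (fun _ => True) X (Hat W n) := by
  refine ⟨hF.cotorsionPairOn_hat, fun hXW M => ?_⟩
  obtain ⟨V, U, f, g, h, hU, hV⟩ := hXW.cores M trivial
  rw [hF.hat_eq_coConeCls]
  exact ⟨V, U, f, g, h, hV, hU⟩

end LeftFrobenius

namespace StrongLeftFrobenius

lemma projective_of_forall_hat (hF : StrongLeftFrobenius X W) {n : ℕ} (hX : ∀ M, Hat X n M)
    {P : 𝒜} (hP : W P) : Projective P := by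
  have hperp (N : 𝒜) : rightPerp W N :=
    rightPerp_of_hat (fun N hN P hP => hF.proj P N hP hN) (hX N)
  exact projective_iff_subsingleton_ext_one.2 fun N => hperp N P hP 1 le_rfl

lemma exists_epi_of_hat (hF : StrongLeftFrobenius X W) {n : ℕ} {M : 𝒜} (hM : Hat X n M) :
    ∃ (P : 𝒜) (g : P ⟶ M), W P ∧ Epi g := by
  obtain ⟨U, p, hU, _⟩ : ∃ (U : 𝒜) (p : U ⟶ M), X U ∧ Epi p := by
    obtain ⟨_, U, _, p, ⟨_, h⟩, hU, _⟩ := hat_succ_of_hat hF.subX.zero hM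
    exact ⟨U, p, hU, h.epi_g⟩
  obtain ⟨_, P, _, q, ⟨_, h⟩, hP, _⟩ := hF.gen.2 U hU
  have := h.epi_g
  exact ⟨P, q ≫ p, hP, epi_comp q p⟩

end StrongLeftFrobenius

end FrobeniusPairs

theorem statement14_general {𝒜 : Type u} [Category.{v} 𝒜] [Abelian 𝒜] [HasExt.{w} 𝒜]
    (X W : 𝒜 → Prop) (hF : StrongLeftFrobenius X W) (n : ℕ) :
    (∀ M : 𝒜, Hat X n M) ↔
      (CotorsionPairOn (fun _ => True) W (fun _ => True) ∧
       CotorsionPairOn (fun _ => True) X (Hat W n) ∧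
       (∀ M N, W M → Hat W n N → Subsingleton (Abelian.Ext M N 1)) ∧
       (∀ M, ConeCls (Hat W n) W M ↔ CoConeCls (Hat W n) W M)) := by
  have hL := hF.toLeftFrobenius
  refine ⟨fun hX => ?_, fun ⟨_, hXW, _, _⟩ => hL.forall_hat_iff_cotorsionPairOn.2 hXW⟩
  have hproj : ∀ P, W P → Projective P := fun P => hF.projective_of_forall_hat hX
  have hWA : CotorsionPairOn (fun _ : 𝒜 => True) W (fun _ => True) :=
    cotorsionPairOn_of_projective hL.subW hproj fun M => hF.exists_epi_of_hat (hX M)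
  have hXW : CotorsionPairOn (fun _ => True) X (Hat W n) :=
    hL.forall_hat_iff_cotorsionPairOn.1 hX
  exact ⟨hWA, hXW, fun M N hM _ => hWA.ext1 M N hM trivial, fun M =>
    (hL.coneCls_hat_iff (hX M)).trans
      (coConeCls_iff_of_projective hL.subW.zero hproj hXW.summandV).symm⟩

/-- For a strong left Frobenius pair `(X, W)` and `n ≥ 0`, the following are
equivalent: (1) `X̂ₙ = C`; (2) `((W, C), (X, Ŵₙ))` is a Hovey twin cotorsion pair on `C`. -/
theorem statement14 {C : Type u} [Category.{v} C] [Abelian C]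
    [EnoughProjectives C] [EnoughInjectives C] [HasExt.{w} C]
    (X W : C → Prop) (hF : StrongLeftFrobenius X W) (n : ℕ) :
    (∀ M : C, Hat X n M) ↔
      (CotorsionPairOn (fun _ => True) W (fun _ => True) ∧
       CotorsionPairOn (fun _ => True) X (Hat W n) ∧
       (∀ M N, W M → Hat W n N → Subsingleton (Abelian.Ext M N 1)) ∧
       (∀ M, ConeCls (Hat W n) W M ↔ CoConeCls (Hat W n) W M)) :=
  statement14_general X W hF n

end FrobeniusPaper
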